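/- arXiv:2403.10671 — 3 statements merged into one kernel-verified Lean document; each statement's English description precedes it below -/
import Mathlib

section
/- Let θ̂ : ℝ → ℝ^d be a prediction-regularized MAP path for L and f, i.e. ∇L(θ̂(λ)) + λ∇f(θ̂(λ)) = 0 for all λ in a neighborhood of 0. Assume θ̂ is differentiable at 0, f is continuously differentiable on a neighborhood of θ̂(0), ∇L is differentiable at θ̂(0) with Hessian H = ∇²L(θ̂(0)), and H is invertible. Then the map λ ↦ f(θ̂(λ)) is differentiable at 0 and its derivative at λ = 0 equals ⟨∇f(θ̂(0)), P⁻¹ ∇f(θ̂(0))⟩, where P = −H is the precision matrix; equivalently, the derivative equals −⟨∇f(θ̂(0)), H⁻¹ ∇f(θ̂(0))⟩. -/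
/-!
Differentiating the stationarity equation `∇L(θ l) + l • ∇f(θ l) = 0` at `l = 0` gives
`H θ'(0) + ∇f(θ 0) = 0`, and the chain rule for `f ∘ θ` concludes. No second derivative of `f`
enters, because the factor `l` vanishes at `0`: for `l • ∇f(θ l)` to be differentiable there,
continuity of `∇f ∘ θ` suffices. Since `H` is invertible, the equation forces a path that is merely
continuous at `0` to be differentiable there.
-/

open scoped RealInnerProductSpace Topology

theorem hasDerivAt_sub_smul_of_continuousAt {𝕜 E : Type*} [NontriviallyNormedField 𝕜]
    [NormedAddCommGroup E] [NormedSpace 𝕜 E] {g : 𝕜 → E} {a : 𝕜} (hg : ContinuousAt g a) :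
    HasDerivAt (fun t => (t - a) • g t) (g a) a := by
  have hslope : slope (fun t => (t - a) • g t) a =ᶠ[𝓝[≠] a] g := by
    filter_upwards [self_mem_nhdsWithin] with t ht
    rw [slope_sub_smul _ (Ne.symm ht)]
  exact hasDerivAt_iff_tendsto_slope.mpr (hg.continuousWithinAt.tendsto.congr' hslope.symm)

theorem hasDerivAt_of_add_sub_smul_eq_zero {𝕜 E F : Type*} [NontriviallyNormedField 𝕜]
    [NormedAddCommGroup E] [NormedSpace 𝕜 E] [NormedAddCommGroup F] [NormedSpace 𝕜 F]
    {Φ : E → F} {Φ' : E →L[𝕜] F} {Φ'inv : F →L[𝕜] E} {θ : 𝕜 → E} {g : 𝕜 → F} {a : 𝕜}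
    (hzero : ∀ᶠ t in 𝓝 a, Φ (θ t) + (t - a) • g t = 0)
    (hθ : ContinuousAt θ a) (hg : ContinuousAt g a)
    (hΦ : HasFDerivAt Φ Φ' (θ a)) (hinv : Function.LeftInverse Φ'inv Φ') :
    HasDerivAt θ (-Φ'inv (g a)) a := by
  have hcomp : Φ ∘ θ =ᶠ[𝓝 a] fun t => -((t - a) • g t) :=
    hzero.mono fun _ => eq_neg_of_add_eq_zero_left
  have hderiv : HasDerivAt (fun t => -((t - a) • g t)) (-g a) a :=
    (hasDerivAt_sub_smul_of_continuousAt hg).fun_neg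
  simpa using (hΦ.of_comp_of_leftInverse hθ hderiv.hasFDerivAt hcomp hinv).hasDerivAt

theorem continuousAt_gradient_of_contDiffAt {𝕜 E : Type*} [RCLike 𝕜] [NormedAddCommGroup E]
    [InnerProductSpace 𝕜 E] [CompleteSpace E] {f : E → 𝕜} {x : E} {n : WithTop ℕ∞}
    (hf : ContDiffAt 𝕜 n f x) (hn : n ≠ 0) : ContinuousAt (gradient f) x :=
  (InnerProductSpace.toDual 𝕜 E).symm.continuous.continuousAt.comp
    (hf.continuousAt_fderiv hn)

theorem regvar_pred_deriv_general {E : Type*} [NormedAddCommGroup E] [InnerProductSpace ℝ E]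
    [CompleteSpace E] {L f : E → ℝ} {θ : ℝ → E} (H : E ≃L[ℝ] E)
    (hstat : ∀ᶠ l in 𝓝 (0 : ℝ), gradient L (θ l) + l • gradient f (θ l) = 0)
    (hθ : ContinuousAt θ 0) (hf : ContDiffAt ℝ 1 f (θ 0))
    (hL : HasFDerivAt (gradient L) (H : E →L[ℝ] E) (θ 0)) :
    HasDerivAt (fun l => f (θ l)) (-⟪gradient f (θ 0), H.symm (gradient f (θ 0))⟫) 0 := by
  have hgrad : ContinuousAt (fun l => gradient f (θ l)) 0 :=
    (continuousAt_gradient_of_contDiffAt hf one_ne_zero).comp' hθ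
  have hpath : HasDerivAt θ (-H.symm (gradient f (θ 0))) 0 :=
    hasDerivAt_of_add_sub_smul_eq_zero (by simpa only [sub_zero] using hstat) hθ hgrad hL
      (Φ'inv := (H.symm : E →L[ℝ] E)) H.symm_apply_apply
  have hchain := (hf.differentiableAt one_ne_zero).hasGradientAt.hasFDerivAt.comp_hasDerivAt 0 hpath
  rwa [InnerProductSpace.toDual_apply_apply, inner_neg_right] at hchain

/-- The derivative at `λ = 0` of the prediction along a
prediction-regularized MAP path recovers the linearized-Laplace variance
`⟨∇f(θ̂ 0), P⁻¹ ∇f(θ̂ 0)⟩ = −⟨∇f(θ̂ 0), H⁻¹ ∇f(θ̂ 0)⟩` where `P = −H`. -/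
theorem regvar_pred_deriv
    (d : ℕ) (L f : EuclideanSpace ℝ (Fin d) → ℝ)
    (θ : ℝ → EuclideanSpace ℝ (Fin d))
    (H : EuclideanSpace ℝ (Fin d) ≃L[ℝ] EuclideanSpace ℝ (Fin d))
    (hstat : ∀ᶠ l in 𝓝 (0 : ℝ),
      gradient L (θ l) + l • gradient f (θ l) = 0)
    (hθ : DifferentiableAt ℝ θ 0)
    (hf : ContDiffAt ℝ 1 f (θ 0))
    (hL : HasFDerivAt (gradient L)
      (H : EuclideanSpace ℝ (Fin d) →L[ℝ] EuclideanSpace ℝ (Fin d)) (θ 0)) :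
    HasDerivAt (fun l => f (θ l))
      (-⟪gradient f (θ 0), H.symm (gradient f (θ 0))⟫) 0 :=
  regvar_pred_deriv_general H hstat hθ.continuousAt hf hL
end

section
/- Let θ̂ : ℝ → ℝ^d be a prediction-regularized MAP path for L and f, i.e. ∇L(θ̂(λ)) + λ∇f(θ̂(λ)) = 0 for all λ in a neighborhood of 0. Assume θ̂ is differentiable at 0, f is continuously differentiable on a neighborhood of θ̂(0), ∇L is differentiable at θ̂(0) with Hessian H = ∇²L(θ̂(0)), and H is invertible. Let g : ℝ^d → ℝ be any function differentiable at θ̂(0). Then the map λ ↦ g(θ̂(λ)) is differentiable at 0 with derivative ⟨∇g(θ̂(0)), P⁻¹ ∇f(θ̂(0))⟩ at λ = 0, where P = −H; this is the covariance term Cov(g, f) of the linearized Laplace approximation. -/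
open scoped RealInnerProductSpace Topology

/-!
Stationarity says `∇L (θ l) = -l • ∇f (θ l)`. The right-hand side is differentiable at `0`, because
`l` vanishes there and `l ↦ ∇f (θ l)` is continuous. Since `∇L` has an invertible derivative `H` at
`θ 0` and `θ` is continuous, differentiability passes from `∇L ∘ θ` to `θ`, with derivative
`-H⁻¹ ∇f (θ 0)` at `0`; the chain rule for `g` then gives the covariance.
-/

section Perturbation

variable {𝕜 E F : Type*} [NontriviallyNormedField 𝕜]
  [NormedAddCommGroup E] [NormedSpace 𝕜 E] [NormedAddCommGroup F] [NormedSpace 𝕜 F]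

theorem hasDerivAt_smul_of_eq_zero_of_continuousAt {c : 𝕜 → 𝕜} {u : 𝕜 → F} {c' a : 𝕜}
    (hc : HasDerivAt c c' a) (hca : c a = 0) (hu : ContinuousAt u a) :
    HasDerivAt (fun t => c t • u t) (c' • u a) a := by
  rw [hasDerivAt_iff_tendsto_slope] at hc ⊢
  refine (hc.smul (hu.tendsto.mono_left nhdsWithin_le_nhds)).congr fun t => ?_
  simp only [slope_def_module, hca, sub_zero, zero_smul, smul_assoc]

theorem hasDerivAt_of_add_smul_eq_zero {A B : E → F} {A' : E →L[𝕜] F} {S : F →L[𝕜] E} {x : 𝕜 → E}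
    (hx : ContinuousAt x 0) (hA : HasFDerivAt A A' (x 0)) (hS : Function.LeftInverse S A')
    (hB : ContinuousAt B (x 0)) (hzero : ∀ᶠ t in 𝓝 0, A (x t) + t • B (x t) = 0) :
    HasDerivAt x (-S (B (x 0))) 0 := by
  have hAx : A ∘ x =ᶠ[𝓝 0] fun t => -(t • B (x t)) :=
    hzero.mono fun t ht => eq_neg_of_add_eq_zero_left ht
  have hrhs : HasDerivAt (fun t => -(t • B (x t))) (-B (x 0)) 0 := by
    simpa only [one_smul] using (hasDerivAt_smul_of_eq_zero_of_continuousAt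
      (hasDerivAt_id' 0) rfl (hB.comp' hx)).fun_neg
  simpa using (hA.of_comp_of_leftInverse hx hrhs.hasFDerivAt hAx hS).hasDerivAt

end Perturbation

theorem regvar_cov_deriv_general {E : Type*} [NormedAddCommGroup E] [InnerProductSpace ℝ E]
    [CompleteSpace E] {L f g : E → ℝ} {θ : ℝ → E} {H : E ≃L[ℝ] E}
    (hstat : ∀ᶠ l in 𝓝 (0 : ℝ), gradient L (θ l) + l • gradient f (θ l) = 0)
    (hθ : ContinuousAt θ 0) (hf : ContDiffAt ℝ 1 f (θ 0))
    (hL : HasFDerivAt (gradient L) (H : E →L[ℝ] E) (θ 0)) (hg : DifferentiableAt ℝ g (θ 0)) :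
    HasDerivAt (fun l => g (θ l)) (-⟪gradient g (θ 0), H.symm (gradient f (θ 0))⟫) 0 := by
  have hθ' : HasDerivAt θ (-H.symm (gradient f (θ 0))) 0 :=
    hasDerivAt_of_add_smul_eq_zero (S := (H.symm : E →L[ℝ] E)) hθ hL H.symm_apply_apply
      (continuousAt_gradient_of_contDiffAt hf one_ne_zero) hstat
  rw [← inner_neg_right, inner_gradient_left]
  exact hg.hasFDerivAt.comp_hasDerivAt 0 hθ'

/-- For any functional `g` differentiable at `θ̂ 0`, the map
`λ ↦ g(θ̂(λ))` is differentiable at `0` with derivative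
`⟨∇g(θ̂ 0), P⁻¹ ∇f(θ̂ 0)⟩ = −⟨∇g(θ̂ 0), H⁻¹ ∇f(θ̂ 0)⟩`, the covariance term
`Cov(g, f)` of the linearized Laplace approximation (`P = −H`). -/
theorem regvar_cov_deriv
    (d : ℕ) (L f g : EuclideanSpace ℝ (Fin d) → ℝ)
    (θ : ℝ → EuclideanSpace ℝ (Fin d))
    (H : EuclideanSpace ℝ (Fin d) ≃L[ℝ] EuclideanSpace ℝ (Fin d))
    (hstat : ∀ᶠ l in 𝓝 (0 : ℝ),
      gradient L (θ l) + l • gradient f (θ l) = 0)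
    (hθ : DifferentiableAt ℝ θ 0)
    (hf : ContDiffAt ℝ 1 f (θ 0))
    (hL : HasFDerivAt (gradient L)
      (H : EuclideanSpace ℝ (Fin d) →L[ℝ] EuclideanSpace ℝ (Fin d)) (θ 0))
    (hg : DifferentiableAt ℝ g (θ 0)) :
    HasDerivAt (fun l => g (θ l))
      (-⟪gradient g (θ 0), H.symm (gradient f (θ 0))⟫) 0 :=
  regvar_cov_deriv_general hstat hθ.continuousAt hf hL hg
end

section
/- Let θ* ∈ ℝ^d be a stationary point of L (∇L(θ*) = 0), assume ∇L is differentiable at θ* with Hessian H = ∇²L(θ*) that is symmetric and invertible, and let f, g : ℝ^d → ℝ be continuously differentiable near θ*. Let θ̂_f and θ̂_g be prediction-regularized MAP paths for the regularizers f and g respectively, both differentiable at 0 with θ̂_f(0) = θ̂_g(0) = θ*. Then the two cross-regularization derivatives agree: d/dλ g(θ̂_f(λ)) at λ = 0 equals d/dλ f(θ̂_g(λ)) at λ = 0, and both equal ⟨∇g(θ*), P⁻¹ ∇f(θ*)⟩ with P = −H. In particular the RegVar covariance is symmetric in f and g. -/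
open scoped RealInnerProductSpace Topology

/-!
Differentiating the stationarity equation `∇L(θ̂_f(λ)) + λ ∇f(θ̂_f(λ)) = 0` at `λ = 0` gives
`H θ̂_f'(0) + ∇f(θ*) = 0`: the factor `λ` vanishes at `0`, so continuity of `∇f` is enough to
differentiate the second term. Hence `θ̂_f'(0) = -H⁻¹ ∇f(θ*)`, the chain rule turns the derivative
of `g ∘ θ̂_f` into `-⟪∇g(θ*), H⁻¹ ∇f(θ*)⟫`, and this is symmetric in `f` and `g` because `H⁻¹` is
a symmetric operator. As `H` is invertible, a path that is merely continuous at `0` is automatically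
differentiable there.
-/

section NormedSpace

variable {𝕜 E F : Type*} [NontriviallyNormedField 𝕜]
  [NormedAddCommGroup E] [NormedSpace 𝕜 E] [NormedAddCommGroup F] [NormedSpace 𝕜 F]

lemma hasDerivAt_sub_smul_of_continuousAt_s4 {u : 𝕜 → F} {a : 𝕜} (hu : ContinuousAt u a) :
    HasDerivAt (fun t => (t - a) • u t) (u a) a := by
  rw [hasDerivAt_iff_tendsto_slope]
  refine (hu.tendsto.mono_left nhdsWithin_le_nhds).congr' ?_
  filter_upwards [self_mem_nhdsWithin] with t ht
  exact (slope_sub_smul u (Ne.symm ht)).symm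

lemma hasDerivAt_of_eventually_add_smul_eq_zero {Φ Ψ : E → F} {γ : 𝕜 → E} {A : E →L[𝕜] F}
    {B : F →L[𝕜] E} (hBA : Function.LeftInverse B A) (hΦ : HasFDerivAt Φ A (γ 0))
    (hΨ : ContinuousAt Ψ (γ 0)) (hγ : ContinuousAt γ 0)
    (hzero : ∀ᶠ t in 𝓝 0, Φ (γ t) + t • Ψ (γ t) = 0) :
    HasDerivAt γ (-B (Ψ (γ 0))) 0 := by
  have hsmul : HasDerivAt (fun t => -(t • Ψ (γ t))) (-Ψ (γ 0)) 0 := by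
    simpa only [sub_zero, Function.comp_apply] using
      (hasDerivAt_sub_smul_of_continuousAt_s4 (hΨ.comp hγ)).fun_neg
  have hcomp : Φ ∘ γ =ᶠ[𝓝 0] fun t => -(t • Ψ (γ t)) :=
    hzero.mono fun _ => eq_neg_of_add_eq_zero_left
  simpa using (hΦ.of_comp_of_leftInverse hγ hsmul.hasFDerivAt hcomp hBA).hasDerivAt

end NormedSpace

section InnerProductSpace

variable {𝕜 E : Type*} [RCLike 𝕜] [NormedAddCommGroup E] [InnerProductSpace 𝕜 E]

lemma isSymmetric_linearEquiv_symm {e : E ≃ₗ[𝕜] E} (he : e.toLinearMap.IsSymmetric) :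
    e.symm.toLinearMap.IsSymmetric := fun x y => by
  simpa using (he (e.symm x) (e.symm y)).symm

variable [CompleteSpace E]

lemma continuousAt_gradient_of_contDiffAt_s4 {n : WithTop ℕ∞} {h : E → 𝕜} {x : E}
    (hh : ContDiffAt 𝕜 n h x) (hn : n ≠ 0) : ContinuousAt (gradient h) x :=
  (InnerProductSpace.toDual 𝕜 E).symm.continuous.continuousAt.comp (hh.continuousAt_fderiv hn)

lemma hasDerivAt_comp_of_hasGradientAt {h : E → 𝕜} {γ : 𝕜 → E} {v w : E} {t : 𝕜}
    (hh : HasGradientAt h v (γ t)) (hγ : HasDerivAt γ w t) :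
    HasDerivAt (fun s => h (γ s)) (inner 𝕜 v w) t :=
  hh.hasFDerivAt.comp_hasDerivAt t hγ

end InnerProductSpace

section RegularizedMAP

variable {E : Type*} [NormedAddCommGroup E] [InnerProductSpace ℝ E] [CompleteSpace E]
  {L f g : E → ℝ} {θstar : E} {θf θg : ℝ → E} {H : E ≃L[ℝ] E}

/-- `θ` is a prediction-regularized MAP path for the regularizer `h`: for `l` near `0`, the point
`θ l` satisfies the stationarity equation of `L + l • h`. The equation is written with the separate
gradients of `L` and `h`, where `gradient` is `0` at points of non-differentiability; the regularity
of `θ` and the value `θ 0` are not part of the notion. -/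
def IsRegularizedMAPPath (L h : E → ℝ) (θ : ℝ → E) : Prop :=
  ∀ᶠ l in 𝓝 (0 : ℝ), gradient L (θ l) + l • gradient h (θ l) = 0

namespace IsRegularizedMAPPath

lemma hasDerivAt (hpath : IsRegularizedMAPPath L f θf)
    (hL : HasFDerivAt (gradient L) (H : E →L[ℝ] E) θstar)
    (hf : ContinuousAt (gradient f) θstar) (hθ0 : θf 0 = θstar) (hθ : ContinuousAt θf 0) :
    HasDerivAt θf (-H.symm (gradient f θstar)) 0 := by
  subst hθ0
  exact hasDerivAt_of_eventually_add_smul_eq_zero (A := (H : E →L[ℝ] E)) (B := (H.symm : E →L[ℝ] E))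
    H.symm_apply_apply hL hf hθ hpath

lemma hasDerivAt_comp (hpath : IsRegularizedMAPPath L f θf)
    (hL : HasFDerivAt (gradient L) (H : E →L[ℝ] E) θstar)
    (hf : ContinuousAt (gradient f) θstar) (hg : DifferentiableAt ℝ g θstar)
    (hθ0 : θf 0 = θstar) (hθ : ContinuousAt θf 0) :
    HasDerivAt (fun l => g (θf l)) (-⟪gradient g θstar, H.symm (gradient f θstar)⟫) 0 := by
  rw [← inner_neg_right]
  exact hasDerivAt_comp_of_hasGradientAt (hθ0 ▸ hg.hasGradientAt)
    (hpath.hasDerivAt hL hf hθ0 hθ)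

end IsRegularizedMAPPath

theorem regvar_cov_symmetric_general
    (hL : HasFDerivAt (gradient L) (H : E →L[ℝ] E) θstar)
    (hsym : H.toLinearMap.IsSymmetric)
    (hf : ContDiffAt ℝ 1 f θstar) (hg : ContDiffAt ℝ 1 g θstar)
    (hθf0 : θf 0 = θstar) (hθg0 : θg 0 = θstar)
    (hθf : ContinuousAt θf 0) (hθg : ContinuousAt θg 0)
    (hpathf : IsRegularizedMAPPath L f θf) (hpathg : IsRegularizedMAPPath L g θg) :
    HasDerivAt (fun l => g (θf l)) (-⟪gradient g θstar, H.symm (gradient f θstar)⟫) 0 ∧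
    HasDerivAt (fun l => f (θg l)) (-⟪gradient g θstar, H.symm (gradient f θstar)⟫) 0 := by
  have hinv : ⟪gradient f θstar, H.symm (gradient g θstar)⟫ =
      ⟪gradient g θstar, H.symm (gradient f θstar)⟫ :=
    (real_inner_comm _ _).trans
      (isSymmetric_linearEquiv_symm (e := H.toLinearEquiv) hsym _ _)
  have hderivf := hpathf.hasDerivAt_comp hL (continuousAt_gradient_of_contDiffAt_s4 hf one_ne_zero)
    (hg.differentiableAt one_ne_zero) hθf0 hθf
  have hderivg := hpathg.hasDerivAt_comp hL (continuousAt_gradient_of_contDiffAt_s4 hg one_ne_zero)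
    (hf.differentiableAt one_ne_zero) hθg0 hθg
  exact ⟨hderivf, hinv ▸ hderivg⟩

end RegularizedMAP

/-- Symmetry of the RegVar covariance. With a symmetric
invertible Hessian `H = ∇²L(θ*)` at a stationary point `θ*` of `L`, the two
cross-regularization derivatives agree:
`d/dλ g(θ̂_f(λ))|₀ = d/dλ f(θ̂_g(λ))|₀ = ⟨∇g(θ*), P⁻¹ ∇f(θ*)⟩` with `P = −H`. -/
theorem regvar_cov_symmetric
    (d : ℕ) (L f g : EuclideanSpace ℝ (Fin d) → ℝ)
    (θstar : EuclideanSpace ℝ (Fin d))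
    (θf θg : ℝ → EuclideanSpace ℝ (Fin d))
    (H : EuclideanSpace ℝ (Fin d) ≃L[ℝ] EuclideanSpace ℝ (Fin d))
    (hstatL : gradient L θstar = 0)
    (hL : HasFDerivAt (gradient L)
      (H : EuclideanSpace ℝ (Fin d) →L[ℝ] EuclideanSpace ℝ (Fin d)) θstar)
    (hsym : ∀ u v : EuclideanSpace ℝ (Fin d), ⟪H u, v⟫ = ⟪u, H v⟫)
    (hf : ContDiffAt ℝ 1 f θstar)
    (hg : ContDiffAt ℝ 1 g θstar)
    (hθf0 : θf 0 = θstar) (hθg0 : θg 0 = θstar)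
    (hθf : DifferentiableAt ℝ θf 0) (hθg : DifferentiableAt ℝ θg 0)
    (hstatf : ∀ᶠ l in 𝓝 (0 : ℝ),
      gradient L (θf l) + l • gradient f (θf l) = 0)
    (hstatg : ∀ᶠ l in 𝓝 (0 : ℝ),
      gradient L (θg l) + l • gradient g (θg l) = 0) :
    deriv (fun l => g (θf l)) 0 = deriv (fun l => f (θg l)) 0 ∧
    deriv (fun l => g (θf l)) 0 = -⟪gradient g θstar, H.symm (gradient f θstar)⟫ := by
  obtain ⟨hderivf, hderivg⟩ := regvar_cov_symmetric_general hL hsym hf hg hθf0 hθg0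
    hθf.continuousAt hθg.continuousAt hstatf hstatg
  exact ⟨hderivf.deriv.trans hderivg.deriv.symm, hderivf.deriv⟩
end
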